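/- arXiv:1503.03040 — 4 statements merged into one kernel-verified Lean document; each statement's English description precedes it below -/
import Mathlib

section
/- Let 𝔤 be a finite-dimensional real Lie algebra of dimension n ≥ 2, Δ ⊆ 𝔤 a Lie subalgebra of dimension n−1, and D : 𝔤 → 𝔤 a derivation with D(Δ) ⊄ Δ. Then W = Δ ∩ D⁻¹Δ is a Lie subalgebra of 𝔤 of dimension n−2. -/
/-! `Δ` and `D⁻¹Δ` are both hyperplanes: the second is the preimage of a maximal subspace and it is
proper because `D Δ ⊄ Δ`. For the same reason it does not contain `Δ`, so the two hyperplanes span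
the whole algebra, and `L ⧸ (Δ ∩ D⁻¹Δ) ≃ (L ⧸ Δ) × (L ⧸ D⁻¹Δ)` has dimension two. Closure under the
bracket is the Leibniz rule. -/

/-- The Chinese remainder isomorphism for two submodules that span the module, induced by the two
quotient maps. -/
noncomputable def quotientInfEquivProdOfCodisjoint {R V : Type*} [Ring R] [AddCommGroup V]
    [Module R V] {p q : Submodule R V} (h : Codisjoint p q) :
    (V ⧸ p ⊓ q) ≃ₗ[R] (V ⧸ p) × (V ⧸ q) :=
  have ker_eq : LinearMap.ker (p.mkQ.prod q.mkQ) = p ⊓ q := by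
    rw [LinearMap.ker_prod, p.ker_mkQ, q.ker_mkQ]
  have range_eq : LinearMap.range (p.mkQ.prod q.mkQ) = ⊤ := by
    rw [LinearMap.range_prod_eq (by simpa only [Submodule.ker_mkQ] using h.eq_top),
      p.range_mkQ, q.range_mkQ, Submodule.prod_top]
  (Submodule.quotEquivOfEq _ _ ker_eq.symm).trans
    (LinearMap.quotKerEquivOfSurjective _ (LinearMap.range_eq_top.mp range_eq))

theorem isCoatom_iff_finrank_quotient_eq_one {K V : Type*} [DivisionRing K] [AddCommGroup V]
    [Module K V] {p : Submodule K V} : IsCoatom p ↔ Module.finrank K (V ⧸ p) = 1 := by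
  rw [← isSimpleModule_iff_isCoatom, isSimpleModule_iff_finrank_eq_one]

theorem finrank_quotient_inf_comap {K V V' : Type*} [DivisionRing K]
    [AddCommGroup V] [Module K V] [AddCommGroup V'] [Module K V']
    {p : Submodule K V} [Module.Finite K (V ⧸ p)] {q : Submodule K V'} {f : V →ₗ[K] V'}
    (hq : IsCoatom q) (h : ¬ p ≤ q.comap f) :
    Module.finrank K (V ⧸ p ⊓ q.comap f) = Module.finrank K (V ⧸ p) + 1 := by
  have comap_coatom : IsCoatom (q.comap f) :=
    (Submodule.isCoatom_comap_or_eq_top f hq).resolve_right fun comap_eq_top ↦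
      h (le_top.trans_eq comap_eq_top.symm)
  have codim_comap : Module.finrank K (V ⧸ q.comap f) = 1 :=
    isCoatom_iff_finrank_quotient_eq_one.mp comap_coatom
  have : Module.Finite K (V ⧸ q.comap f) := Module.finite_of_finrank_eq_succ codim_comap
  have spanning : Codisjoint p (q.comap f) := (comap_coatom.not_le_iff_codisjoint.mp h).symm
  rw [(quotientInfEquivProdOfCodisjoint spanning).finrank_eq, Module.finrank_prod, codim_comap]

theorem lie_mem_inf_comap {R L : Type*} [CommRing R] [LieRing L] [LieAlgebra R L]
    {Δ : Submodule R L} (hΔ : ∀ X ∈ Δ, ∀ Y ∈ Δ, ⁅X, Y⁆ ∈ Δ)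
    {D : L →ₗ[R] L} (hD : ∀ X Y : L, D ⁅X, Y⁆ = ⁅D X, Y⁆ + ⁅X, D Y⁆)
    {X Y : L} (hX : X ∈ Δ ⊓ Δ.comap D) (hY : Y ∈ Δ ⊓ Δ.comap D) : ⁅X, Y⁆ ∈ Δ ⊓ Δ.comap D := by
  obtain ⟨hX, hDX⟩ := hX
  obtain ⟨hY, hDY⟩ := hY
  refine ⟨hΔ X hX Y hY, ?_⟩
  rw [SetLike.mem_coe, Submodule.mem_comap, hD]
  exact Δ.add_mem (hΔ _ hDX _ hY) (hΔ _ hX _ hDY)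

theorem W_is_subalgebra_of_dim_general
    {K L : Type*} [Field K] [LieRing L] [LieAlgebra K L]
    (Δ : Submodule K L) (hΔcodim : Module.finrank K (L ⧸ Δ) = 1)
    (hΔalg : ∀ X ∈ Δ, ∀ Y ∈ Δ, ⁅X, Y⁆ ∈ Δ)
    (D : L →ₗ[K] L) (hD : ∀ X Y : L, D ⁅X, Y⁆ = ⁅D X, Y⁆ + ⁅X, D Y⁆)
    (hDΔ : ¬ (∀ X ∈ Δ, D X ∈ Δ)) :
    (∀ X ∈ Δ ⊓ Δ.comap D, ∀ Y ∈ Δ ⊓ Δ.comap D, ⁅X, Y⁆ ∈ Δ ⊓ Δ.comap D) ∧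
    Module.finrank K (L ⧸ Δ ⊓ Δ.comap D) = 2 := by
  have : Module.Finite K (L ⧸ Δ) := Module.finite_of_finrank_eq_succ hΔcodim
  refine ⟨fun X hX Y hY ↦ lie_mem_inf_comap hΔalg hD hX hY, ?_⟩
  rw [finrank_quotient_inf_comap (isCoatom_iff_finrank_quotient_eq_one.mpr hΔcodim) hDΔ, hΔcodim]

/-- If Δ is a codimension-one Lie subalgebra of an n-dimensional real Lie
algebra (n ≥ 2) and D is a derivation with D(Δ) ⊄ Δ, then W = Δ ∩ D⁻¹Δ is a
Lie subalgebra of dimension n − 2. -/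
theorem W_is_subalgebra_of_dim
    {L : Type*} [LieRing L] [LieAlgebra ℝ L] [FiniteDimensional ℝ L]
    (n : ℕ) (hn2 : 2 ≤ n) (hn : Module.finrank ℝ L = n)
    (Δ : Submodule ℝ L) (hΔdim : Module.finrank ℝ Δ = n - 1)
    (hΔalg : ∀ X ∈ Δ, ∀ Y ∈ Δ, ⁅X, Y⁆ ∈ Δ)
    (D : L →ₗ[ℝ] L) (hD : ∀ X Y : L, D ⁅X, Y⁆ = ⁅D X, Y⁆ + ⁅X, D Y⁆)
    (hDΔ : ¬ (∀ X ∈ Δ, D X ∈ Δ)) :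
    (∀ X ∈ Δ ⊓ Δ.comap D, ∀ Y ∈ Δ ⊓ Δ.comap D, ⁅X, Y⁆ ∈ Δ ⊓ Δ.comap D) ∧
    Module.finrank ℝ (Δ ⊓ Δ.comap D : Submodule ℝ L) = n - 2 := by
  have hΔcodim : Module.finrank ℝ (L ⧸ Δ) = 1 := by rw [Submodule.finrank_quotient]; omega
  refine (W_is_subalgebra_of_dim_general Δ hΔcodim hΔalg D hD hDΔ).imp_right fun codim_W ↦ ?_
  have := (Δ ⊓ Δ.comap D).finrank_quotient_add_finrank
  omega
end

section
/- Let G be a group, V a vector space over a field K, ρ : G → GL(V) a linear representation, and F : G → V a map satisfying the cocycle identity F(g′g) = F(g) + ρ(g⁻¹)(F(g′)) for all g, g′ ∈ G. Let Δ ⊆ V be a linear subspace and Z = {g ∈ G : F(g) ∈ Δ}. Then Z is a subgroup of G if and only if for all g, g′ ∈ Z one has ρ(g′)(F(g)) ∈ Δ. -/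
/-!
Taking `g' * g = g * g⁻¹` in the cocycle identity gives `F g⁻¹ = -(g • F g)`, and in general
`F (g * h⁻¹) = F h⁻¹ + h • F g`. So, once `F h⁻¹ ∈ Δ`, the condition `h • F g ∈ Δ` says exactly that
`g * h⁻¹` lies in the locus `F ⁻¹' Δ`: the criterion is closure of the locus under division.
-/

section RightCocycle

variable {G A : Type*} [Group G] [AddGroup A]

/-- The cocycle identity for a map `F` from a group `G` to a possibly noncommutative additive group
on which `G` acts. The convention is right-handed: it is `g ↦ F g⁻¹` that is a crossed homomorphism,
that is, a `groupCohomology.IsCocycle₁` when `A` is commutative. -/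
def IsRightCocycle [SMul G A] (F : G → A) : Prop :=
  ∀ g g' : G, F (g' * g) = F g + g⁻¹ • F g'

namespace IsRightCocycle

theorem map_mul_inv [SMul G A] {F : G → A} (hF : IsRightCocycle F) (g h : G) :
    F (g * h⁻¹) = F h⁻¹ + h • F g := by
  rw [hF, inv_inv]

theorem map_mul_inv_mem_iff [SMul G A] {F : G → A} (hF : IsRightCocycle F) {Δ : AddSubgroup A}
    {g h : G} (hh : F h⁻¹ ∈ Δ) : F (g * h⁻¹) ∈ Δ ↔ h • F g ∈ Δ := by
  rw [hF.map_mul_inv, Δ.add_mem_cancel_left hh]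

variable [MulAction G A] {F : G → A}

theorem map_one (hF : IsRightCocycle F) : F 1 = 0 := by
  simpa using hF 1 1

theorem map_inv (hF : IsRightCocycle F) (g : G) : F g⁻¹ = -(g • F g) := by
  rw [eq_neg_iff_add_eq_zero, ← hF.map_mul_inv, mul_inv_cancel, hF.map_one]

theorem map_inv_mem_iff (hF : IsRightCocycle F) {Δ : AddSubgroup A} {g : G} :
    F g⁻¹ ∈ Δ ↔ g • F g ∈ Δ := by
  rw [hF.map_inv, neg_mem_iff]

end IsRightCocycle

theorem singular_locus_subgroup_iff_general [MulAction G A] {F : G → A} (hF : IsRightCocycle F)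
    (Δ : AddSubgroup A) :
    (∃ H : Subgroup G, (H : Set G) = F ⁻¹' Δ) ↔
      ∀ g ∈ F ⁻¹' Δ, ∀ g' ∈ F ⁻¹' Δ, g' • F g ∈ Δ := by
  constructor
  · rintro ⟨H, hH⟩ g hg h hh
    rw [← hH] at hg hh
    have h_inv : h⁻¹ ∈ F ⁻¹' Δ := hH ▸ H.inv_mem hh
    have h_div : g * h⁻¹ ∈ F ⁻¹' Δ := hH ▸ H.mul_mem hg (H.inv_mem hh)
    exact (hF.map_mul_inv_mem_iff h_inv).mp h_div
  · intro smul_mem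
    have one_mem : (1 : G) ∈ F ⁻¹' Δ := by simp [hF.map_one]
    refine ⟨Subgroup.ofDiv (F ⁻¹' Δ) ⟨1, one_mem⟩ fun g hg h hh ↦ ?_, rfl⟩
    have h_inv : F h⁻¹ ∈ Δ := hF.map_inv_mem_iff.mpr (smul_mem h hh h hh)
    exact (hF.map_mul_inv_mem_iff h_inv).mpr (smul_mem g hg h hh)

end RightCocycle

/-- Abstract criterion for the singular locus to be a subgroup: if
F : G → V satisfies the cocycle identity F(g′g) = F(g) + ρ(g⁻¹)(F(g′)) for a
representation ρ : G → GL(V), and Z = {g : F(g) ∈ Δ}, then Z is a subgroup of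
G if and only if ρ(g′)(F(g)) ∈ Δ for all g, g′ ∈ Z. -/
theorem singular_locus_subgroup_iff
    {G : Type*} [Group G] {K : Type*} [Field K] {V : Type*}
    [AddCommGroup V] [Module K V]
    (ρ : G →* (V ≃ₗ[K] V)) (F : G → V)
    (hF : ∀ g g' : G, F (g' * g) = F g + ρ g⁻¹ (F g'))
    (Δ : Submodule K V) (Z : Set G) (hZ : Z = {g : G | F g ∈ Δ}) :
    (∃ H : Subgroup G, (H : Set G) = Z) ↔
      (∀ g ∈ Z, ∀ g' ∈ Z, ρ g' (F g) ∈ Δ) := by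
  subst hZ
  let _ : MulAction G V := MulAction.compHom V ρ
  exact singular_locus_subgroup_iff_general hF Δ.toAddSubgroup
end

section
/- Let H = [[1,0],[0,−1]], X = [[0,1],[0,0]], Y = [[0,0],[1,0]] in the 2×2 real matrices, and let g = [[a,b],[c,d]] with ad − bc = 1. Then the three matrices gY − Yg, gH, gX are linearly dependent over ℝ if and only if a² = 1; equivalently, Y − g⁻¹Yg belongs to the span of {H, X} if and only if a = ±1. -/
/-!
Left translation by `g⁻¹` carries `gY − Yg`, `gH`, `gX` to `Y − g⁻¹Yg`, `H`, `X`. As `H` and `X`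
are independent, both conditions therefore say that `Y − g⁻¹Yg` lies in `span {H, X}`, the space of
upper triangular matrices of trace zero. The trace of `Y − g⁻¹Yg` always vanishes, and its lower
left entry is `1 − a² / det g`, where `a` is the upper left entry of `g`.
-/

section LeftTranslation

variable {K A : Type*}

theorem linearIndependent_mul_left_comp_iff [CommSemiring K] [Semiring A] [Algebra K A] {ι : Type*}
    {g : A} (hg : IsLeftRegular g) {v : ι → A} :
    LinearIndependent K ((g * ·) ∘ v) ↔ LinearIndependent K v :=
  (LinearMap.mulLeft K g).linearIndependent_iff_of_injOn hg.injOn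

theorem units_mul_sub_conj [Ring A] (g : Aˣ) (y : A) :
    g * (y - g⁻¹ * y * g) = g * y - y * g := by
  simp [mul_sub, ← mul_assoc]

theorem not_linearIndependent_commutator_cons_iff [Field K] [Ring A] [Algebra K A] {n : ℕ}
    (g : Aˣ) (y : A) {v : Fin n → A} (hv : LinearIndependent K v) :
    ¬ LinearIndependent K (Fin.cons (g * y - y * g) ((g * ·) ∘ v) : Fin (n + 1) → A) ↔
      y - g⁻¹ * y * g ∈ Submodule.span K (Set.range v) := by
  rw [← units_mul_sub_conj, ← Fin.comp_cons (g * · : A → A),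
    linearIndependent_mul_left_comp_iff g.isUnit.isRegular.left, linearIndependent_finCons,
    and_iff_right hv, not_not]

end LeftTranslation

section TwoByTwo

variable {R : Type*} [CommRing R]

theorem mem_span_diag_upper_iff {M : Matrix (Fin 2) (Fin 2) R} :
    M ∈ Submodule.span R {!![1, 0; 0, -1], !![0, 1; 0, 0]} ↔ M 1 0 = 0 ∧ M.trace = 0 := by
  rw [Submodule.mem_span_pair, Matrix.trace_fin_two]
  constructor
  · rintro ⟨x, y, rfl⟩
    simp
  · rintro ⟨lower_eq_zero, trace_eq_zero⟩
    refine ⟨M 0 0, M 0 1, ?_⟩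
    ext i j
    fin_cases i <;> fin_cases j <;> simp [lower_eq_zero, eq_neg_of_add_eq_zero_right trace_eq_zero]

theorem linearIndependent_diag_upper :
    LinearIndependent R
      ![(!![1, 0; 0, -1] : Matrix (Fin 2) (Fin 2) R), !![0, 1; 0, 0]] := by
  rw [LinearIndependent.pair_iff]
  intro s t h
  exact ⟨by simpa using congr_fun₂ h 0 0, by simpa using congr_fun₂ h 0 1⟩

theorem inv_mul_lower_mul_apply_one_zero (g : Matrix (Fin 2) (Fin 2) R) :
    (g⁻¹ * (!![0, 0; 1, 0] : Matrix (Fin 2) (Fin 2) R) * g) 1 0 =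
      Ring.inverse g.det * g 0 0 ^ 2 := by
  simp [Matrix.inv_def, Matrix.adjugate_fin_two, Matrix.mul_apply, sq, mul_assoc]

theorem lower_sub_conj_mem_span_diag_upper_iff {g : Matrix (Fin 2) (Fin 2) R}
    (hg : IsUnit g.det) :
    !![0, 0; 1, 0] - g⁻¹ * !![0, 0; 1, 0] * g ∈
        Submodule.span R {!![1, 0; 0, -1], !![0, 1; 0, 0]} ↔ g 0 0 ^ 2 = g.det := by
  have trace_eq_zero : (!![0, 0; 1, 0] - g⁻¹ * !![0, 0; 1, 0] * g).trace = 0 := by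
    rw [Matrix.trace_sub, Matrix.trace_conj' ((Matrix.isUnit_iff_isUnit_det g).2 hg), sub_self]
  rw [mem_span_diag_upper_iff, and_iff_left trace_eq_zero, Matrix.sub_apply,
    inv_mul_lower_mul_apply_one_zero, sub_eq_zero, eq_comm,
    Ring.inverse_mul_eq_iff_eq_mul _ _ _ hg]
  simp

end TwoByTwo

theorem singular_locus_SL2_first_general {K : Type*} [Field K]
    (H : Matrix (Fin 2) (Fin 2) K) (hH : H = !![1, 0; 0, -1])
    (X : Matrix (Fin 2) (Fin 2) K) (hX : X = !![0, 1; 0, 0])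
    (Y : Matrix (Fin 2) (Fin 2) K) (hY : Y = !![0, 0; 1, 0])
    (g : Matrix (Fin 2) (Fin 2) K) (hg : IsUnit g.det) :
    (¬ LinearIndependent K ![g * Y - Y * g, g * H, g * X] ↔ g 0 0 ^ 2 = g.det) ∧
    (Y - g⁻¹ * Y * g ∈ Submodule.span K {H, X} ↔ g 0 0 ^ 2 = g.det) := by
  have independent : LinearIndependent K ![H, X] := hH ▸ hX ▸ linearIndependent_diag_upper
  have mem_iff : Y - g⁻¹ * Y * g ∈ Submodule.span K {H, X} ↔ g 0 0 ^ 2 = g.det :=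
    hH ▸ hX ▸ hY ▸ lower_sub_conj_mem_span_diag_upper_iff hg
  refine ⟨?_, mem_iff⟩
  rw [← mem_iff]
  obtain ⟨u, rfl⟩ := (Matrix.isUnit_iff_isUnit_det g).2 hg
  have translate : (u * · : Matrix (Fin 2) (Fin 2) K → _) ∘ ![H, X] = ![u * H, u * X] :=
    (FinVec.map_eq _ _).symm
  have span_range : Set.range ![H, X] = {H, X} := Matrix.range_cons_cons_empty H X ![]
  rw [← translate, ← span_range, ← Matrix.coe_units_inv]
  exact not_linearIndependent_commutator_cons_iff u Y independent

/-- Singular locus of the ARS on SL(2,ℝ) defined by Δ = span{H,X} and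
D = −ad(Y): for g = [[a,b],[c,d]] with det g = 1, the matrices gY − Yg, gH, gX
are linearly dependent iff a² = 1; equivalently Y − g⁻¹Yg ∈ span{H,X} iff
a = ±1. -/
theorem singular_locus_SL2_first
    (a b c d : ℝ) (hdet : a * d - b * c = 1)
    (H : Matrix (Fin 2) (Fin 2) ℝ) (hH : H = !![1, 0; 0, -1])
    (X : Matrix (Fin 2) (Fin 2) ℝ) (hX : X = !![0, 1; 0, 0])
    (Y : Matrix (Fin 2) (Fin 2) ℝ) (hY : Y = !![0, 0; 1, 0])
    (g : Matrix (Fin 2) (Fin 2) ℝ) (hg : g = !![a, b; c, d]) :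
    (¬ LinearIndependent ℝ ![g * Y - Y * g, g * H, g * X] ↔ a ^ 2 = 1) ∧
    (Y - g⁻¹ * Y * g ∈ Submodule.span ℝ ({H, X} : Set (Matrix (Fin 2) (Fin 2) ℝ))
      ↔ (a = 1 ∨ a = -1)) := by
  subst hg
  simpa [hdet] using singular_locus_SL2_first_general H hH X hX Y hY !![a, b; c, d] (by simp [hdet])
end

section
/- Let X = [[0,1],[0,0]], Y = [[0,0],[1,0]] in the 2×2 real matrices, and let g = [[a,b],[c,d]] with ad − bc = 1. Then X − g⁻¹Xg belongs to the span of {X, Y} if and only if c·d = 0. -/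
/-!
The span of `X` and `Y` consists of the matrices with zero diagonal. Since `X` is the matrix unit
`E₀₁`, `g⁻¹Xg` is the product of the first column of `g⁻¹` and the second row `(c, d)` of `g`.
The former is `(d, -c)` up to the unit `det g`, so up to that unit the diagonal of `g⁻¹Xg` is
`(cd, -cd)`.
-/

open Matrix
open scoped Ring

theorem mem_span_offDiag_pair_iff {R : Type*} [Semiring R] {M : Matrix (Fin 2) (Fin 2) R} :
    M ∈ Submodule.span R {!![0, 1; 0, 0], !![0, 0; 1, 0]} ↔ M 0 0 = 0 ∧ M 1 1 = 0 := by
  rw [Submodule.mem_span_pair]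
  constructor
  · rintro ⟨p, q, rfl⟩
    simp
  · rintro ⟨h₀, h₁⟩
    refine ⟨M 0 1, M 1 0, ?_⟩
    rw [eta_fin_two M, h₀, h₁]
    simp

theorem mul_single_one_mul_eq_vecMulVec {l m n o R : Type*} [Fintype m] [Fintype n]
    [DecidableEq m] [DecidableEq n] [Semiring R] (A : Matrix l m R) (B : Matrix n o R)
    (i : m) (j : n) : A * single i j (1 : R) * B = vecMulVec (A.col i) (B.row j) := by
  rw [single_eq_single_vecMulVec_single, mul_vecMulVec, vecMulVec_mul, mulVec_single_one,
    single_one_vecMul]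

theorem inv_col_zero_fin_two {R : Type*} [CommRing R] (g : Matrix (Fin 2) (Fin 2) R) :
    g⁻¹.col 0 = g.det⁻¹ʳ • ![g 1 1, -g 1 0] := by
  rw [inv_def, adjugate_fin_two]
  ext i
  fin_cases i <;> simp

theorem inv_mul_upperNilpotent_mul {R : Type*} [CommRing R] (g : Matrix (Fin 2) (Fin 2) R) :
    g⁻¹ * !![0, 1; 0, 0] * g =
      g.det⁻¹ʳ • !![g 1 0 * g 1 1, g 1 1 ^ 2; -g 1 0 ^ 2, -(g 1 0 * g 1 1)] := by
  have single_eq : !![0, 1; 0, 0] = single (0 : Fin 2) (1 : Fin 2) (1 : R) := by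
    ext i j
    fin_cases i <;> fin_cases j <;> simp
  rw [single_eq, mul_single_one_mul_eq_vecMulVec, inv_col_zero_fin_two, smul_vecMulVec]
  congr 1
  ext i j
  fin_cases i <;> fin_cases j <;> simp [vecMulVec_apply] <;> ring

theorem singular_locus_SL2_second_general {R : Type*} [CommRing R]
    (g : Matrix (Fin 2) (Fin 2) R) (hg : IsUnit g.det) :
    !![0, 1; 0, 0] - g⁻¹ * !![0, 1; 0, 0] * g ∈
        Submodule.span R {!![0, 1; 0, 0], !![0, 0; 1, 0]} ↔
      g 1 0 * g 1 1 = 0 := by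
  have hinv : IsUnit g.det⁻¹ʳ := isUnit_ringInverse.mpr hg
  rw [mem_span_offDiag_pair_iff, inv_mul_upperNilpotent_mul]
  simp [hinv.mul_right_eq_zero]

/-- Singular locus of the ARS on SL(2,ℝ) defined by Δ = span{X,Y} and
D = −ad(X): for g = [[a,b],[c,d]] with det g = 1, one has
X − g⁻¹Xg ∈ span{X,Y} iff c·d = 0. -/
theorem singular_locus_SL2_second
    (a b c d : ℝ) (hdet : a * d - b * c = 1)
    (X : Matrix (Fin 2) (Fin 2) ℝ) (hX : X = !![0, 1; 0, 0])
    (Y : Matrix (Fin 2) (Fin 2) ℝ) (hY : Y = !![0, 0; 1, 0])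
    (g : Matrix (Fin 2) (Fin 2) ℝ) (hg : g = !![a, b; c, d]) :
    X - g⁻¹ * X * g ∈ Submodule.span ℝ ({X, Y} : Set (Matrix (Fin 2) (Fin 2) ℝ))
      ↔ c * d = 0 := by
  subst hX hY hg
  have hunit : IsUnit !![a, b; c, d].det := by simp [det_fin_two_of, hdet]
  simpa using singular_locus_SL2_second_general _ hunit
end
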